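/- Let T be a finite connected acyclic simple graph (a tree) with at least one edge, and let k be a natural number. T contains no path on 2k+3 vertices as a subgraph if and only if there exists an edge xy of T such that every vertex u of T satisfies min(dist(u,x), dist(u,y)) ≤ k. -/

import Mathlib

/-- `G` contains a path on `n` vertices as a subgraph: `n` distinct vertices
joined consecutively by edges. -/
def HasPathOn {V : Type*} (G : SimpleGraph V) (n : ℕ) : Prop :=
  ∃ f : Fin n → V, Function.Injective f ∧
    ∀ (i : ℕ) (h : i + 1 < n), G.Adj (f ⟨i, Nat.lt_of_succ_lt h⟩) (f ⟨i + 1, h⟩)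

namespace SimpleGraph

variable {V : Type*} {G : SimpleGraph V}

/-- In a tree, a vertex has at most one neighbour closer to a given root. -/
lemma IsTree.eq_of_adj_of_dist_eq_dist_add_one (hG : G.IsTree) {u x y z : V}
    (hxy : G.Adj x y) (hzy : G.Adj z y) (hx : G.dist u y = G.dist u x + 1)
    (hz : G.dist u y = G.dist u z + 1) : x = z := by
  obtain ⟨p, hp⟩ := hG.connected.exists_walk_length_eq_dist u x
  obtain ⟨q, hq⟩ := hG.connected.exists_walk_length_eq_dist u z
  have hp' : (p.concat hxy).IsPath :=
    Walk.isPath_of_length_eq_dist _ (by rw [Walk.length_concat, hp, hx])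
  have hq' : (q.concat hzy).IsPath :=
    Walk.isPath_of_length_eq_dist _ (by rw [Walk.length_concat, hq, hz])
  have h : p.concat hxy = q.concat hzy :=
    congrArg Subtype.val ((hG.isAcyclic.subsingleton_path u y).elim ⟨_, hp'⟩ ⟨_, hq'⟩)
  exact (Walk.concat_inj h).1

/-- In a tree, if `u` lies on the `x`-side and `b` on the `y`-side of the edge `xy`, then
distances from `u` to `b` are measured through that edge. -/
lemma IsTree.dist_eq_of_adj_of_separates (hG : G.IsTree) {u x y b : V} (hxy : G.Adj x y)
    (hu : G.dist u y = G.dist u x + 1) (hb : G.dist x b = G.dist y b + 1) :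
    G.dist u b = G.dist u x + 1 + G.dist y b := by
  induction hn : G.dist y b generalizing x y with
  | zero =>
    obtain rfl := (hG.connected.dist_eq_zero_iff).1 hn
    simpa using hu
  | succ n ih =>
    obtain ⟨p, hp⟩ := hG.connected.exists_walk_length_eq_dist y b
    cases p with
    | nil => simp at hn
    | @cons _ z _ hyz q =>
      have hq : G.dist z b ≤ n := by
        have := dist_le q
        rw [Walk.length_cons] at hp
        omega
      have hzb : G.dist y b = G.dist z b + 1 := by
        rcases hG.dist_eq_dist_add_one_of_adj b hyz with h | h <;>
          simp only [G.dist_comm (u := b)] at h <;> omega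
      rcases hG.dist_eq_dist_add_one_of_adj u hyz with h | h
      · obtain rfl := hG.eq_of_adj_of_dist_eq_dist_add_one hxy hyz.symm hu h
        omega
      · rw [ih hyz h hzb (by omega)]
        omega

/-- In a tree, the vertex with index `i` of a path is at distance `i` from the first vertex. -/
lemma IsTree.dist_path_eq (hG : G.IsTree) {n : ℕ} {f : Fin n → V} (hf : Function.Injective f)
    (hadj : ∀ (i : ℕ) (h : i + 1 < n), G.Adj (f ⟨i, Nat.lt_of_succ_lt h⟩) (f ⟨i + 1, h⟩))
    (i : ℕ) (hi : i < n) : G.dist (f ⟨0, by omega⟩) (f ⟨i, hi⟩) = i := by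
  induction i using Nat.twoStepInduction with
  | zero => simp
  | one => exact dist_eq_one_iff_adj.2 (hadj 0 hi)
  | more i ih₀ ih₁ =>
    have h₀ := ih₀ (by omega)
    have h₁ := ih₁ (by omega)
    rcases hG.dist_eq_dist_add_one_of_adj (f ⟨0, by omega⟩) (hadj (i + 1) hi) with h | h
    · have := hf (hG.eq_of_adj_of_dist_eq_dist_add_one (hadj i (by omega))
        (hadj (i + 1) hi).symm (by omega) h)
      simp only [Fin.mk.injEq] at this
      omega
    · exact h.trans (congrArg (· + 1) h₁)

/-- Connected graphs contain a path on `n` vertices as soon as two vertices are at distance at least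
`n - 1`. -/
lemma Connected.hasPathOn_of_le_dist_add_one (hG : G.Connected) {a b : V} {n : ℕ}
    (h : n ≤ G.dist a b + 1) : HasPathOn G n := by
  obtain ⟨p, hp, hl⟩ := hG.exists_path_of_dist a b
  refine ⟨fun i ↦ p.getVert i, fun i j hij ↦ Fin.ext ?_, fun i hi ↦ ?_⟩
  · exact hp.getVert_injOn (by simp; omega) (by simp; omega) hij
  · exact p.adj_getVert_succ (i := i) (by omega)

/-- If distances in a tree with an edge are at most `2 * k + 1`, then the middle edge of a longest
path is within distance `k` of every vertex. -/
lemma IsTree.exists_adj_forall_min_dist_le [Finite V] (hG : G.IsTree) (hE : ∃ x y : V, G.Adj x y)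
    {k : ℕ} (hk : ∀ a b, G.dist a b ≤ 2 * k + 1) :
    ∃ x y : V, G.Adj x y ∧ ∀ u : V, min (G.dist u x) (G.dist u y) ≤ k := by
  obtain ⟨x₀, y₀, h₀⟩ := hE
  have : Nonempty (V × V) := ⟨(x₀, y₀)⟩
  obtain ⟨⟨a, b⟩, hmax⟩ := Finite.exists_max fun q : V × V ↦ G.dist q.1 q.2
  replace hmax (c d : V) : G.dist c d ≤ G.dist a b := hmax (c, d)
  have hpos : 1 ≤ G.dist a b := (dist_eq_one_iff_adj.2 h₀).symm.trans_le (hmax x₀ y₀)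
  have hab := hk a b
  obtain ⟨p, hp⟩ := hG.connected.exists_walk_length_eq_dist a b
  set m := G.dist a b / 2
  have hm : m < p.length := by omega
  have hxy := p.adj_getVert_succ hm
  have hax := dist_le (p.take m)
  have hyb := dist_le (p.drop (m + 1))
  rw [Walk.take_length] at hax
  rw [Walk.drop_length] at hyb
  set x := p.getVert m
  set y := p.getVert (m + 1)
  have hxy₁ : G.dist x y = 1 := dist_eq_one_iff_adj.2 hxy
  have h₁ : G.dist a b ≤ G.dist a x + G.dist x b := hG.connected.dist_triangle
  have h₂ : G.dist a b ≤ G.dist a y + G.dist y b := hG.connected.dist_triangle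
  have h₃ : G.dist a y ≤ G.dist a x + G.dist x y := hG.connected.dist_triangle
  have h₄ : G.dist x b ≤ G.dist x y + G.dist y b := hG.connected.dist_triangle
  refine ⟨x, y, hxy, fun u ↦ ?_⟩
  rcases hG.dist_eq_dist_add_one_of_adj u hxy with h | h
  · have := hG.dist_eq_of_adj_of_separates (b := a) hxy.symm h
      (by rw [G.dist_comm (u := y), G.dist_comm (u := x)]; omega)
    have := hmax u a
    rw [G.dist_comm (u := x) (v := a)] at *
    omega
  · have := hG.dist_eq_of_adj_of_separates (b := b) hxy h (by omega)
    have := hmax u b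
    omega

end SimpleGraph

/-- A finite tree with at least one edge has no path on `2k+3` vertices iff
there is an edge `xy` such that every vertex is within distance `k` of `x` or `y`. -/
theorem tree_no_long_path_iff_capital_edge {V : Type*} [Fintype V] (T : SimpleGraph V)
    (hT : T.IsTree) (hE : ∃ x y : V, T.Adj x y) (k : ℕ) :
    ¬ HasPathOn T (2 * k + 3) ↔
      ∃ x y : V, T.Adj x y ∧ ∀ u : V, min (T.dist u x) (T.dist u y) ≤ k := by
  constructor
  · intro hP
    refine hT.exists_adj_forall_min_dist_le hE fun a b ↦ ?_
    by_contra! h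
    exact hP (hT.connected.hasPathOn_of_le_dist_add_one (a := a) (b := b) (by omega))
  · rintro ⟨x, y, hxy, hk⟩ ⟨f, hf, hadj⟩
    have hab := hT.dist_path_eq hf hadj (2 * k + 2) (by omega)
    generalize f ⟨0, _⟩ = a at hab
    generalize f ⟨2 * k + 2, _⟩ = b at hab
    have hxy₁ : T.dist x y = 1 := SimpleGraph.dist_eq_one_iff_adj.2 hxy
    have h₁ : T.dist a b ≤ T.dist a x + T.dist x b := hT.connected.dist_triangle
    have h₂ : T.dist a b ≤ T.dist a y + T.dist y b := hT.connected.dist_triangle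
    have h₃ : T.dist a y ≤ T.dist a x + T.dist x y := hT.connected.dist_triangle
    have h₄ : T.dist x b ≤ T.dist x y + T.dist y b := hT.connected.dist_triangle
    have h₅ : T.dist y b ≤ T.dist y x + T.dist x b := hT.connected.dist_triangle
    have ha := hk a
    have hb := hk b
    rw [T.dist_comm (u := b) (v := x), T.dist_comm (u := b) (v := y)] at hb
    rw [T.dist_comm (u := y) (v := x)] at h₅
    omega
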